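/- Let 0 < p < q < ∞, α > 1, β = qα/p, C ∈ ℂ and a ∈ 𝔻. The function f(z) = C(1 − az)^{−2α/p} attains equality in Kulikov's inequality: (∫_𝔻 |f(z)|^q dA_β(z))^{1/q} = (∫_𝔻 |f(z)|^p dA_α(z))^{1/p}. -/

import Mathlib

open MeasureTheory Metric

/-- The weighted Bergman measure `dA_α` on the unit disk:
density `((α-1)/π)(1-|z|²)^(α-2)` with respect to Lebesgue area measure. -/
noncomputable def bergmanMeasure (α : ℝ) : Measure ℂ :=
  (volume.restrict (ball (0 : ℂ) 1)).withDensity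
    (fun z => ENNReal.ofReal ((α - 1) / Real.pi * (1 - ‖z‖ ^ 2) ^ (α - 2)))

/-!
Let `w = conj a` and let `φ` be the disk involution exchanging `0` and `w`. It attains equality in
the Schwarz–Pick lemma, `1 - ‖φ z‖² = ‖φ' z‖ (1 - ‖z‖²)`, so substituting `φ` in an integral
against `dA_γ` produces exactly the factor `‖φ' z‖ ^ γ`. As `dA_γ` is a probability measure,
`‖φ'‖ ^ γ` has integral one, and `‖φ' z‖ = (1 - ‖a‖²) / ‖1 - a z‖²` turns this into
`∫ ‖1 - a z‖ ^ (-2γ) dA_γ = (1 - ‖a‖²) ^ (-γ)`. Hence the `L^s(dA_γ)` norm of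
`C (1 - a z) ^ (-2γ/s)` is `‖C‖ (1 - ‖a‖²) ^ (-γ/s)`, which depends on `γ` and `s` only through
`γ / s`, and `β / q = α / p`.
-/

open ComplexConjugate

section AreaIntegral

variable {E : Type*} [NormedAddCommGroup E] [NormedSpace ℝ E]

lemma det_restrictScalars_toSpanSingleton (c : ℂ) :
    ((ContinuousLinearMap.toSpanSingleton ℂ c).restrictScalars ℝ).det = ‖c‖ ^ 2 := by
  rw [Complex.sq_norm]
  simp [ContinuousLinearMap.det, LinearMap.det_restrictScalars, Algebra.norm_complex_apply]

lemma integral_image_eq_integral_sq_norm_deriv_smul {s : Set ℂ} {f f' : ℂ → ℂ}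
    (hs : MeasurableSet s) (hf' : ∀ z ∈ s, HasDerivWithinAt f (f' z) s z) (hf : Set.InjOn f s)
    (g : ℂ → E) :
    ∫ z in f '' s, g z = ∫ z in s, ‖f' z‖ ^ 2 • g (f z) := by
  rw [integral_image_eq_integral_abs_det_fderiv_smul volume hs
    (fun z hz ↦ (hf' z hz).hasFDerivWithinAt.restrictScalars ℝ) hf]
  simp only [det_restrictScalars_toSpanSingleton, abs_sq]

lemma integral_comp_sq_norm (g : ℝ → E) :
    ∫ z : ℂ, g (‖z‖ ^ 2) = Real.pi • ∫ t in Set.Ioi 0, g t := by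
  have substitution : ∫ t in Set.Ioi 0, g t = (2 : ℝ) • ∫ r in Set.Ioi (0 : ℝ), r • g (r ^ 2) := by
    rw [← integral_comp_rpow_Ioi_of_pos two_pos, ← integral_smul]
    norm_num [mul_smul]
  rw [integral_fun_norm_addHaar volume (fun r ↦ g (r ^ 2)), substitution]
  simp [Measure.real, Complex.volume_ball, ← Nat.cast_smul_eq_nsmul ℝ, smul_smul, mul_comm]

lemma setIntegral_ball_comp_sq_norm {R : ℝ} (hR : 0 ≤ R) (g : ℝ → E) :
    ∫ z in ball (0 : ℂ) R, g (‖z‖ ^ 2) = Real.pi • ∫ t in (0 : ℝ)..R ^ 2, g t := by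
  have preimage : ball (0 : ℂ) R = (fun z ↦ ‖z‖ ^ 2) ⁻¹' Set.Iio (R ^ 2) := by
    ext z
    simp [sq_lt_sq₀ (norm_nonneg z) hR]
  rw [← integral_indicator measurableSet_ball, preimage]
  change ∫ z : ℂ, (Set.Iio (R ^ 2)).indicator g (‖z‖ ^ 2) = _
  rw [integral_comp_sq_norm, setIntegral_indicator measurableSet_Iio, Set.Ioi_inter_Iio,
    intervalIntegral.integral_of_le (sq_nonneg R), integral_Ioc_eq_integral_Ioo]

end AreaIntegral

section UnitDisk

lemma one_sub_sq_norm_pos {z : ℂ} (hz : ‖z‖ < 1) : 0 < 1 - ‖z‖ ^ 2 :=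
  sub_pos.mpr (pow_lt_one₀ (norm_nonneg z) hz two_ne_zero)

lemma one_sub_conj_mul_ne_zero {w z : ℂ} (hw : ‖w‖ < 1) (hz : ‖z‖ < 1) : 1 - conj w * z ≠ 0 := by
  refine (isUnit_one_sub_of_norm_lt_one ?_).ne_zero
  rw [norm_mul, RCLike.norm_conj]
  exact mul_lt_one_of_nonneg_of_lt_one_left (norm_nonneg w) hw hz.le

lemma sq_norm_one_sub_conj_mul_sub_sq_norm_sub (w z : ℂ) :
    ‖1 - conj w * z‖ ^ 2 - ‖w - z‖ ^ 2 = (1 - ‖w‖ ^ 2) * (1 - ‖z‖ ^ 2) := by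
  simp only [Complex.sq_norm, Complex.normSq_apply, Complex.sub_re, Complex.sub_im, Complex.mul_re,
    Complex.mul_im, Complex.conj_re, Complex.conj_im, Complex.one_re, Complex.one_im]
  ring

/-- The Möbius transformation that, for `‖w‖ < 1`, restricts to the involutive automorphism of the
unit disk exchanging `0` and `w`. It is a total function on `ℂ`, with the junk value `0` at the
pole `1 / conj w`. -/
noncomputable def diskInvolution (w z : ℂ) : ℂ := (w - z) / (1 - conj w * z)

variable {w z : ℂ}

lemma hasDerivAt_diskInvolution (h : 1 - conj w * z ≠ 0) :
    HasDerivAt (diskInvolution w) ((conj w * w - 1) / (1 - conj w * z) ^ 2) z := by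
  have numerator : HasDerivAt (fun z ↦ w - z) (-1) z := (hasDerivAt_id z).const_sub w
  have denominator : HasDerivAt (fun z ↦ 1 - conj w * z) (-conj w) z := by
    simpa using ((hasDerivAt_id z).const_mul (conj w)).const_sub 1
  refine (numerator.div denominator h).congr_deriv ?_
  congr 1
  ring

lemma norm_deriv_diskInvolution (hw : ‖w‖ < 1) (hz : ‖z‖ < 1) :
    ‖deriv (diskInvolution w) z‖ = (1 - ‖w‖ ^ 2) / ‖1 - conj w * z‖ ^ 2 := by
  have numerator : ‖conj w * w - 1‖ = 1 - ‖w‖ ^ 2 := by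
    rw [Complex.conj_mul', norm_sub_rev]
    exact_mod_cast Complex.norm_of_nonneg (one_sub_sq_norm_pos hw).le
  rw [(hasDerivAt_diskInvolution (one_sub_conj_mul_ne_zero hw hz)).deriv, norm_div, norm_pow,
    numerator]

lemma norm_deriv_diskInvolution_pos (hw : ‖w‖ < 1) (hz : ‖z‖ < 1) :
    0 < ‖deriv (diskInvolution w) z‖ := by
  rw [norm_deriv_diskInvolution hw hz]
  have := one_sub_sq_norm_pos hw
  have := norm_pos_iff.mpr (one_sub_conj_mul_ne_zero hw hz)
  positivity

lemma one_sub_sq_norm_diskInvolution (hw : ‖w‖ < 1) (hz : ‖z‖ < 1) :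
    1 - ‖diskInvolution w z‖ ^ 2 = ‖deriv (diskInvolution w) z‖ * (1 - ‖z‖ ^ 2) := by
  have := norm_ne_zero_iff.mpr (one_sub_conj_mul_ne_zero hw hz)
  rw [norm_deriv_diskInvolution hw hz, div_mul_eq_mul_div,
    ← sq_norm_one_sub_conj_mul_sub_sq_norm_sub, diskInvolution, norm_div, div_pow, sub_div,
    div_self (pow_ne_zero 2 this)]

lemma norm_diskInvolution_lt_one (hw : ‖w‖ < 1) (hz : ‖z‖ < 1) : ‖diskInvolution w z‖ < 1 := by
  have : 0 < 1 - ‖diskInvolution w z‖ ^ 2 := by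
    rw [one_sub_sq_norm_diskInvolution hw hz]
    exact mul_pos (norm_deriv_diskInvolution_pos hw hz) (one_sub_sq_norm_pos hz)
  exact (sq_lt_one_iff₀ (norm_nonneg _)).mp (sub_pos.mp this)

lemma diskInvolution_diskInvolution (hw : ‖w‖ < 1) (hz : ‖z‖ < 1) :
    diskInvolution w (diskInvolution w z) = z := by
  have hwz := one_sub_conj_mul_ne_zero hw hz
  have hww := one_sub_conj_mul_ne_zero hw hw
  have numerator : w - (w - z) / (1 - conj w * z) = z * (1 - conj w * w) / (1 - conj w * z) := by
    rw [eq_div_iff hwz, sub_mul, div_mul_cancel₀ _ hwz]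
    ring
  have denominator :
      1 - conj w * ((w - z) / (1 - conj w * z)) = (1 - conj w * w) / (1 - conj w * z) := by
    field_simp
    ring
  rw [diskInvolution, diskInvolution, numerator, denominator, div_div_div_cancel_right₀ hwz,
    mul_div_cancel_right₀ _ hww]

lemma bijOn_diskInvolution_ball (hw : ‖w‖ < 1) :
    Set.BijOn (diskInvolution w) (ball 0 1) (ball 0 1) := by
  have mapsTo : Set.MapsTo (diskInvolution w) (ball 0 1) (ball 0 1) := fun z hz ↦ by
    rw [mem_ball_zero_iff] at hz ⊢
    exact norm_diskInvolution_lt_one hw hz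
  have leftInv : Set.LeftInvOn (diskInvolution w) (diskInvolution w) (ball 0 1) := fun z hz ↦
    diskInvolution_diskInvolution hw (mem_ball_zero_iff.mp hz)
  exact Set.InvOn.bijOn ⟨leftInv, leftInv⟩ mapsTo mapsTo

end UnitDisk

section BergmanMeasure

variable {E : Type*} [NormedAddCommGroup E] [NormedSpace ℝ E] {α : ℝ} {w : ℂ}

lemma integral_bergmanMeasure (hα : 1 ≤ α) (g : ℂ → E) :
    ∫ z, g z ∂bergmanMeasure α =
      ∫ z in ball 0 1, ((α - 1) / Real.pi * (1 - ‖z‖ ^ 2) ^ (α - 2)) • g z := by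
  rw [bergmanMeasure, integral_withDensity_eq_integral_toReal_smul (by fun_prop) (by simp)]
  refine setIntegral_congr_fun measurableSet_ball fun z hz ↦ ?_
  have := one_sub_sq_norm_pos (mem_ball_zero_iff.mp hz)
  have := sub_nonneg.mpr hα
  rw [ENNReal.toReal_ofReal (by positivity)]

lemma isProbabilityMeasure_bergmanMeasure (hα : 1 < α) :
    IsProbabilityMeasure (bergmanMeasure α) := by
  have radial : ∫ t in (0 : ℝ)..1, (1 - t) ^ (α - 2) = (α - 1)⁻¹ := by
    rw [intervalIntegral.integral_comp_sub_left (fun t ↦ t ^ (α - 2)),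
      integral_rpow (Or.inl (by linarith)), show α - 2 + 1 = α - 1 by ring]
    simp [Real.zero_rpow (sub_pos.mpr hα).ne']
  have mass : ∫ _, (1 : ℝ) ∂bergmanMeasure α = 1 := by
    simp only [integral_bergmanMeasure hα.le, smul_eq_mul, mul_one, integral_const_mul]
    rw [setIntegral_ball_comp_sq_norm zero_le_one (fun t ↦ (1 - t) ^ (α - 2)), one_pow, radial,
      smul_eq_mul]
    have := (sub_pos.mpr hα).ne'
    field_simp
  exact isProbabilityMeasure_iff_real.mpr (by simpa using mass)

lemma integral_norm_deriv_diskInvolution_rpow_smul_comp (hα : 1 ≤ α) (hw : ‖w‖ < 1) (g : ℂ → E) :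
    ∫ z, ‖deriv (diskInvolution w) z‖ ^ α • g (diskInvolution w z) ∂bergmanMeasure α =
      ∫ z, g z ∂bergmanMeasure α := by
  have hasDerivWithinAt : ∀ z ∈ ball (0 : ℂ) 1,
      HasDerivWithinAt (diskInvolution w) (deriv (diskInvolution w) z) (ball 0 1) z := fun z hz ↦
    (hasDerivAt_diskInvolution (one_sub_conj_mul_ne_zero hw
      (mem_ball_zero_iff.mp hz))).differentiableAt.hasDerivAt.hasDerivWithinAt
  rw [integral_bergmanMeasure hα, integral_bergmanMeasure hα]
  nth_rewrite 2 [← (bijOn_diskInvolution_ball hw).image_eq]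
  rw [integral_image_eq_integral_sq_norm_deriv_smul measurableSet_ball hasDerivWithinAt
    (bijOn_diskInvolution_ball hw).injOn]
  refine setIntegral_congr_fun measurableSet_ball fun z hz ↦ ?_
  rw [mem_ball_zero_iff] at hz
  have hderiv := norm_deriv_diskInvolution_pos hw hz
  simp only [smul_smul]
  rw [one_sub_sq_norm_diskInvolution hw hz,
    Real.mul_rpow hderiv.le (one_sub_sq_norm_pos hz).le, Real.rpow_sub hderiv, Real.rpow_two]
  congr 1
  field_simp

lemma integral_norm_one_sub_conj_mul_rpow (hα : 1 < α) (hw : ‖w‖ < 1) :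
    ∫ z, ‖1 - conj w * z‖ ^ (-2 * α) ∂bergmanMeasure α = (1 - ‖w‖ ^ 2) ^ (-α) := by
  have := isProbabilityMeasure_bergmanMeasure hα
  have hw' := one_sub_sq_norm_pos hw
  have integral_jacobian : ∫ z, ‖deriv (diskInvolution w) z‖ ^ α ∂bergmanMeasure α = 1 := by
    simpa using integral_norm_deriv_diskInvolution_rpow_smul_comp hα.le hw fun _ ↦ (1 : ℝ)
  have kernel_eq : ∀ z ∈ ball (0 : ℂ) 1, ‖1 - conj w * z‖ ^ (-2 * α) =
      (1 - ‖w‖ ^ 2) ^ (-α) * ‖deriv (diskInvolution w) z‖ ^ α := fun z hz ↦ by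
    rw [norm_deriv_diskInvolution hw (mem_ball_zero_iff.mp hz),
      Real.div_rpow hw'.le (by positivity), Real.rpow_neg hw'.le, div_eq_mul_inv,
      inv_mul_cancel_left₀ (by positivity), ← Real.rpow_neg (by positivity), ← Real.rpow_two,
      ← Real.rpow_mul (norm_nonneg _)]
    congr 1
    ring
  have ae_mem_ball : ∀ᵐ z ∂bergmanMeasure α, z ∈ ball (0 : ℂ) 1 :=
    (withDensity_absolutelyContinuous _ _).ae_le (ae_restrict_mem measurableSet_ball)
  rw [integral_congr_ae (ae_mem_ball.mono kernel_eq), integral_const_mul, integral_jacobian,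
    mul_one]

lemma bergman_norm_const_mul_one_sub_mul_cpow {γ s : ℝ} {a : ℂ} (hγ : 1 < γ) (hs : s ≠ 0)
    (ha : ‖a‖ < 1) (C : ℂ) :
    (∫ z, ‖C * (1 - a * z) ^ ((-2 * (γ / s) : ℝ) : ℂ)‖ ^ s ∂bergmanMeasure γ) ^ (1 / s) =
      ‖C‖ * (1 - ‖a‖ ^ 2) ^ (-(γ / s)) := by
  have norm_rpow (z : ℂ) : ‖C * (1 - a * z) ^ ((-2 * (γ / s) : ℝ) : ℂ)‖ ^ s =
      ‖C‖ ^ s * ‖1 - a * z‖ ^ (-2 * γ) := by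
    rw [norm_mul, Complex.norm_cpow_real, Real.mul_rpow (by positivity) (by positivity),
      ← Real.rpow_mul (by positivity)]
    congr 2
    field_simp
  have kernel : ∫ z, ‖1 - a * z‖ ^ (-2 * γ) ∂bergmanMeasure γ = (1 - ‖a‖ ^ 2) ^ (-γ) := by
    simpa using integral_norm_one_sub_conj_mul_rpow (w := conj a) hγ (by simpa using ha)
  have ha' := one_sub_sq_norm_pos ha
  simp only [norm_rpow, integral_const_mul, kernel]
  rw [Real.mul_rpow (by positivity) (by positivity), ← Real.rpow_mul (norm_nonneg C),
    ← Real.rpow_mul ha'.le, mul_one_div_cancel hs, Real.rpow_one, mul_one_div, neg_div]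

end BergmanMeasure

theorem kulikov_extremizers
    (p q α β : ℝ) (hp : 0 < p) (hpq : p < q) (hα : 1 < α) (hβ : β = q * α / p)
    (C : ℂ) (a : ℂ) (ha : a ∈ ball (0 : ℂ) 1)
    (f : ℂ → ℂ) (hf : ∀ z, f z = C * (1 - a * z) ^ ((-2 * α / p : ℝ) : ℂ)) :
    (∫ z, ‖f z‖ ^ q ∂(bergmanMeasure β)) ^ (1 / q) =
      (∫ z, ‖f z‖ ^ p ∂(bergmanMeasure α)) ^ (1 / p) := by
  rw [mem_ball_zero_iff] at ha
  have hq : 0 < q := hp.trans hpq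
  have hβ_gt : 1 < β := by
    rw [hβ, mul_div_right_comm]
    exact one_lt_mul_of_lt_of_le ((one_lt_div hp).mpr hpq) hα.le
  have exponent_eq : α / p = β / q := by
    rw [hβ]
    field_simp
  simp only [hf, mul_div_assoc]
  rw [bergman_norm_const_mul_one_sub_mul_cpow hα hp.ne' ha, exponent_eq,
    bergman_norm_const_mul_one_sub_mul_cpow hβ_gt hq.ne' ha]
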